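/- arXiv:2009.12107 — 3 statements merged into one kernel-verified Lean document; each statement's English description precedes it below -/
import Mathlib

section
/- Let R be a commutative ring and n > 2 even. If a block-diagonal matrix diag(I, g) lies in Spin_{2n}(R), then g = u·I_{2^{n-1}} for some u ∈ R with u² = 1. Consequently the kernel of the projection χ : Spin_{2n}(R) → GL_{2^{n-1}}(R), (g₁,g₂) ↦ g₁, is isomorphic to μ₂(R) = {u ∈ R : u² = 1}, giving an exact sequence 1 → μ₂(R) → Spin_{2n}(R) → GL_{2^{n-1}}(R). -/
open Matrix

noncomputable section

/-- Reindexing equivalence `Fin (2 ^ n) ⊕ Fin (2 ^ n) ≃ Fin (2 ^ (n + 1))`. -/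
def pow2Equiv (n : ℕ) : Fin (2 ^ n) ⊕ Fin (2 ^ n) ≃ Fin (2 ^ (n + 1)) :=
  finSumFinEquiv.trans (finCongr (by rw [pow_succ]; ring))

/-- The Suslin matrix `S_n(v, w)` of size `2 ^ n` associated to `v, w : Fin (n+1) → R`. -/
def sus (R : Type) [CommRing R] : (n : ℕ) → (Fin (n + 1) → R) → (Fin (n + 1) → R) →
    Matrix (Fin (2 ^ n)) (Fin (2 ^ n)) R
  | 0, v, _ => v 0 • 1
  | n + 1, v, w =>
      Matrix.reindex (pow2Equiv n) (pow2Equiv n)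
        (Matrix.fromBlocks (v 0 • 1) (sus R n (v ∘ Fin.succ) (w ∘ Fin.succ))
          (-(sus R n (w ∘ Fin.succ) (v ∘ Fin.succ))ᵀ) (w 0 • 1))

/-- The conjugate Suslin matrix `S̄_n(v, w) = S_n(w, v)ᵀ`. -/
def susBar (R : Type) [CommRing R] (n : ℕ) (v w : Fin (n + 1) → R) :
    Matrix (Fin (2 ^ n)) (Fin (2 ^ n)) R :=
  (sus R n w v)ᵀ

/-- Suslin's matrices `J_n`. -/
def Jmat (R : Type) [CommRing R] : (n : ℕ) → Matrix (Fin (2 ^ n)) (Fin (2 ^ n)) R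
  | 0 => 1
  | n + 1 =>
      if Even (n + 1) then
        Matrix.reindex (pow2Equiv n) (pow2Equiv n)
          (Matrix.fromBlocks (Jmat R n) 0 0 (-(Jmat R n)))
      else
        Matrix.reindex (pow2Equiv n) (pow2Equiv n)
          (Matrix.fromBlocks 0 (Jmat R n) (-(Jmat R n)) 0)

/-- The involution `M ↦ M* = J_n · Mᵀ · J_nᵀ`. -/
def invol (R : Type) [CommRing R] (n : ℕ) (M : Matrix (Fin (2 ^ n)) (Fin (2 ^ n)) R) :
    Matrix (Fin (2 ^ n)) (Fin (2 ^ n)) R :=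
  Jmat R n * Mᵀ * (Jmat R n)ᵀ

/-- `φ(v, w) = [[0, S_n(v,w)], [S̄_n(v,w), 0]]` (note the shift: vectors in `R^{n+1}`,
matrices of size `2 ^ (n + 1)`). -/
def phiMat (R : Type) [CommRing R] (n : ℕ) (v w : Fin (n + 1) → R) :
    Matrix (Fin (2 ^ (n + 1))) (Fin (2 ^ (n + 1))) R :=
  Matrix.reindex (pow2Equiv n) (pow2Equiv n)
    (Matrix.fromBlocks 0 (sus R n v w) (susBar R n v w) 0)

/-- The set of Suslin matrices of size `2 ^ m`. -/
def SuslinSet (R : Type) [CommRing R] (m : ℕ) : Set (Matrix (Fin (2 ^ m)) (Fin (2 ^ m)) R) :=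
  {S | ∃ v w : Fin (m + 1) → R, S = sus R m v w}

/-- The image of the hyperbolic space `R^{m+1} ⊕ R^{m+1}` inside the Clifford algebra
`M_{2^{m+1}}(R)`. -/
def PhiSet (R : Type) [CommRing R] (m : ℕ) :
    Set (Matrix (Fin (2 ^ (m + 1))) (Fin (2 ^ (m + 1))) R) :=
  {x | ∃ v w : Fin (m + 1) → R, x = phiMat R m v w}

/-- The block diagonal matrix `diag(g₁, g₂)`. -/
def diagBlock (R : Type) [CommRing R] (m : ℕ)
    (g₁ g₂ : Matrix (Fin (2 ^ m)) (Fin (2 ^ m)) R) :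
    Matrix (Fin (2 ^ (m + 1))) (Fin (2 ^ (m + 1))) R :=
  Matrix.reindex (pow2Equiv m) (pow2Equiv m) (Matrix.fromBlocks g₁ 0 0 g₂)

/-- `Spin_{2(m+1)}(R)`, as the set of pairs `(g₁, g₂)` such that `x = diag(g₁, g₂)`
satisfies `x · x* = 1` and conjugation by `x` maps the image of the hyperbolic space
onto itself. -/
def SpinPair (R : Type) [CommRing R] (m : ℕ) :
    Set (Matrix (Fin (2 ^ m)) (Fin (2 ^ m)) R × Matrix (Fin (2 ^ m)) (Fin (2 ^ m)) R) :=
  {p | IsUnit p.1 ∧ IsUnit p.2 ∧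
    diagBlock R m p.1 p.2 * invol R (m + 1) (diagBlock R m p.1 p.2) = 1 ∧
    (fun y => diagBlock R m p.1 p.2 * y * (diagBlock R m p.1 p.2)⁻¹) '' PhiSet R m
      = PhiSet R m}

/-- The group `G_m(R)` of `g ∈ GL_{2^m}(R)` such that `g · S · g*` is a Suslin matrix
for every Suslin matrix `S`. -/
def GSet (R : Type) [CommRing R] (m : ℕ) : Set (Matrix (Fin (2 ^ m)) (Fin (2 ^ m)) R) :=
  {g | IsUnit g ∧ ∀ S ∈ SuslinSet R m, g * S * invol R m g ∈ SuslinSet R m}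

/-- The group `SG_m(R)` of `g ∈ G_m(R)` preserving the length `l(S(v,w)) = v ⬝ᵥ w`. -/
def SGSet (R : Type) [CommRing R] (m : ℕ) : Set (Matrix (Fin (2 ^ m)) (Fin (2 ^ m)) R) :=
  {g | g ∈ GSet R m ∧ ∀ v w v' w' : Fin (m + 1) → R,
    g * sus R m v w * invol R m g = sus R m v' w' → v' ⬝ᵥ w' = v ⬝ᵥ w}

/-- The hyperbolic quadratic form `q(v, w) = v ⬝ᵥ w` on `R^n ⊕ R^n`. -/
def hypForm (R : Type) [CommRing R] (n : ℕ) :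
    QuadraticForm R ((Fin n → R) × (Fin n → R)) :=
  LinearMap.BilinMap.toQuadraticMap
    (LinearMap.mk₂ R (fun x y => x.1 ⬝ᵥ y.2)
      (fun x x' y => by simp [add_dotProduct])
      (fun c x y => by simp [smul_dotProduct])
      (fun x y y' => by simp [dotProduct_add])
      (fun x c y => by simp [dotProduct_smul]))

/-- `E_i = S_m(e_i, 0)`. -/
def Emat (R : Type) [CommRing R] (m : ℕ) (i : Fin (m + 1)) :
    Matrix (Fin (2 ^ m)) (Fin (2 ^ m)) R :=
  sus R m (Pi.single i 1) 0

/-- `F_i = S_m(0, e_i)`. -/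
def Fmat (R : Type) [CommRing R] (m : ℕ) (i : Fin (m + 1)) :
    Matrix (Fin (2 ^ m)) (Fin (2 ^ m)) R :=
  sus R m 0 (Pi.single i 1)

/-!
If `x = diag(1, g)` lies in the spin group, then `x φ(v, w) = φ(v', w') x` for suitable `v', w'`;
the lower-left block of this equation reads `g S̄(v, w) = S̄(v', w')`, so right multiplication by
`gᵀ` preserves the Suslin matrices. Such a right multiplier is a scalar: applied to the identity it
is itself a Suslin matrix `S(v, w)`; applied to `E₀` it shows that the off-diagonal blocks of
`S(v, w)` vanish, and applied to `E₁` that the two scalars on its diagonal agree. Finally, for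
`x = diag(1, u)` the condition `x x* = 1` says exactly that `u² = 1`, because `J` is block-diagonal
in even rank.
-/

/-- The block matrix `[[A, B], [C, D]]` with blocks of size `2 ^ n`, indexed by `Fin (2 ^ (n + 1))`
as the Suslin matrices are. -/
def pow2Blocks {α : Type*} {n : ℕ} (A B C D : Matrix (Fin (2 ^ n)) (Fin (2 ^ n)) α) :
    Matrix (Fin (2 ^ (n + 1))) (Fin (2 ^ (n + 1))) α :=
  Matrix.reindex (pow2Equiv n) (pow2Equiv n) (Matrix.fromBlocks A B C D)

section Blocks

variable {α : Type*} {n : ℕ} {A B C D A' B' C' D' : Matrix (Fin (2 ^ n)) (Fin (2 ^ n)) α}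

theorem pow2Blocks_inj :
    pow2Blocks A B C D = pow2Blocks A' B' C' D' ↔ A = A' ∧ B = B' ∧ C = C' ∧ D = D' := by
  simp only [pow2Blocks, EmbeddingLike.apply_eq_iff_eq, fromBlocks_inj]

theorem pow2Blocks_transpose : (pow2Blocks A B C D)ᵀ = pow2Blocks Aᵀ Cᵀ Bᵀ Dᵀ := by
  simp only [pow2Blocks, transpose_reindex, fromBlocks_transpose]

theorem pow2Blocks_mul [NonUnitalNonAssocSemiring α] :
    pow2Blocks A B C D * pow2Blocks A' B' C' D' =
      pow2Blocks (A * A' + B * C') (A * B' + B * D') (C * A' + D * C') (C * B' + D * D') := by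
  simp only [pow2Blocks, reindex_apply, submatrix_mul_equiv, fromBlocks_multiply]

theorem smul_pow2Blocks {β : Type*} [SMul β α] (u : β) :
    u • pow2Blocks A B C D = pow2Blocks (u • A) (u • B) (u • C) (u • D) := by
  simp only [pow2Blocks, reindex_apply, ← fromBlocks_smul, submatrix_smul, Pi.smul_apply]

@[simp]
theorem pow2Blocks_zero [Zero α] :
    pow2Blocks (0 : Matrix (Fin (2 ^ n)) (Fin (2 ^ n)) α) 0 0 0 = 0 := by
  simp only [pow2Blocks, fromBlocks_zero, reindex_apply, submatrix_zero, Pi.zero_apply]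

@[simp]
theorem pow2Blocks_one [Zero α] [One α] :
    pow2Blocks (1 : Matrix (Fin (2 ^ n)) (Fin (2 ^ n)) α) 0 0 1 = 1 := by
  simp only [pow2Blocks, fromBlocks_one, reindex_apply, submatrix_one_equiv]

end Blocks

theorem smul_one_matrix_inj {α ι : Type*} [NonAssocSemiring α] [DecidableEq ι] [Nonempty ι]
    {a b : α} : a • (1 : Matrix ι ι α) = b • 1 ↔ a = b := by
  simp only [smul_one_eq_diagonal, diagonal_injective.eq_iff, funext_iff, forall_const]

theorem single_zero_comp_succ {α : Type*} [Zero α] {n : ℕ} (a : α) :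
    (Pi.single 0 a : Fin (n + 1) → α) ∘ Fin.succ = 0 := by
  ext
  simp

theorem single_succ_comp_succ {α : Type*} [Zero α] {n : ℕ} (i : Fin n) (a : α) :
    (Pi.single i.succ a : Fin (n + 1) → α) ∘ Fin.succ = Pi.single i a := by
  ext j
  simp [Pi.single_apply]

section Suslin

variable {R : Type} [CommRing R] {n : ℕ}

theorem sus_succ (v w : Fin (n + 2) → R) :
    sus R (n + 1) v w = pow2Blocks (v 0 • 1) (sus R n (v ∘ Fin.succ) (w ∘ Fin.succ))
      (-(sus R n (w ∘ Fin.succ) (v ∘ Fin.succ))ᵀ) (w 0 • 1) := rfl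

theorem sus_smul (u : R) (v w : Fin (n + 1) → R) :
    sus R n (u • v) (u • w) = u • sus R n v w := by
  induction n with
  | zero => simp [sus, smul_smul]
  | succ n ih =>
    have comp_succ (x : Fin (n + 2) → R) : (u • x) ∘ Fin.succ = u • (x ∘ Fin.succ) := rfl
    simp [sus_succ, comp_succ, ih, smul_pow2Blocks, smul_smul]

@[simp]
theorem sus_zero : sus R n 0 0 = 0 := by
  simpa using sus_smul (0 : R) (0 : Fin (n + 1) → R) 0

theorem sus_eq_zero_comm {v w : Fin (n + 2) → R} :
    sus R (n + 1) v w = 0 ↔ sus R (n + 1) w v = 0 := by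
  simp only [sus_succ, ← pow2Blocks_zero, pow2Blocks_inj, neg_eq_zero, transpose_eq_zero]
  tauto

theorem pow2Blocks_mem_SuslinSet_iff {A B C D : Matrix (Fin (2 ^ n)) (Fin (2 ^ n)) R} :
    pow2Blocks A B C D ∈ SuslinSet R (n + 1) ↔
      ∃ (a b : R) (v w : Fin (n + 1) → R),
        A = a • 1 ∧ B = sus R n v w ∧ C = -(sus R n w v)ᵀ ∧ D = b • 1 := by
  constructor
  · rintro ⟨v, w, h⟩
    exact ⟨v 0, w 0, v ∘ Fin.succ, w ∘ Fin.succ, pow2Blocks_inj.1 h⟩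
  · rintro ⟨a, b, v, w, rfl, rfl, rfl, rfl⟩
    exact ⟨Fin.cons a v, Fin.cons b w, rfl⟩

theorem one_mem_SuslinSet : (1 : Matrix (Fin (2 ^ n)) (Fin (2 ^ n)) R) ∈ SuslinSet R n := by
  refine ⟨Pi.single 0 1, Pi.single 0 1, ?_⟩
  cases n with
  | zero => simp [sus]
  | succ n => simp [sus_succ, single_zero_comp_succ]

theorem Emat_mem_SuslinSet (i : Fin (n + 1)) : Emat R n i ∈ SuslinSet R n :=
  ⟨_, _, rfl⟩

theorem Emat_zero : Emat R (n + 1) 0 = pow2Blocks 1 0 0 0 := by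
  simp [Emat, sus_succ, single_zero_comp_succ]

theorem Fmat_zero : Fmat R (n + 1) 0 = pow2Blocks 0 0 0 1 := by
  simp [Fmat, sus_succ, single_zero_comp_succ]

theorem Emat_succ (i : Fin (n + 1)) :
    Emat R (n + 1) i.succ = pow2Blocks 0 (Emat R n i) (-(Fmat R n i)ᵀ) 0 := by
  simp [Emat, Fmat, sus_succ, single_succ_comp_succ]

theorem sus_tail_eq_zero_of_Emat_zero_mul_mem {v w : Fin (n + 3) → R}
    (h : Emat R (n + 2) 0 * sus R (n + 2) v w ∈ SuslinSet R (n + 2)) :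
    sus R (n + 1) (v ∘ Fin.succ) (w ∘ Fin.succ) = 0 := by
  rw [Emat_zero, sus_succ, pow2Blocks_mul, pow2Blocks_mem_SuslinSet_iff] at h
  obtain ⟨-, -, v', w', -, upper, lower, -⟩ := h
  -- The lower-left block of `E₀ S(v, w)` is zero, which forces the upper-right block to vanish too.
  have swapped : sus R (n + 1) w' v' = 0 := by simpa using lower.symm
  simpa [sus_eq_zero_comm.1 swapped] using upper

theorem eq_of_Emat_one_mul_pow2Blocks_mem {a b : R}
    (h : Emat R (n + 2) 1 * pow2Blocks (a • 1) 0 0 (b • 1) ∈ SuslinSet R (n + 2)) : a = b := by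
  rw [← Fin.succ_zero_eq_one, Emat_succ, pow2Blocks_mul, pow2Blocks_mem_SuslinSet_iff] at h
  obtain ⟨-, -, v, w, -, upper, lower, -⟩ := h
  -- `v 0` is read off from both off-diagonal blocks, once as `b` and once as `a`.
  simp only [Emat_zero, Fmat_zero, sus_succ, pow2Blocks_transpose, mul_smul_comm, mul_one,
    mul_zero, zero_add, add_zero, smul_pow2Blocks, smul_neg, neg_inj, transpose_smul,
    transpose_one, pow2Blocks_inj] at upper lower
  exact (smul_one_matrix_inj.1 lower.2.2.2).trans (smul_one_matrix_inj.1 upper.1).symm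

theorem exists_eq_smul_one_of_forall_mul_mem_SuslinSet
    {h : Matrix (Fin (2 ^ (n + 2))) (Fin (2 ^ (n + 2))) R}
    (hmul : ∀ S ∈ SuslinSet R (n + 2), S * h ∈ SuslinSet R (n + 2)) : ∃ u : R, h = u • 1 := by
  obtain ⟨v, w, rfl⟩ : h ∈ SuslinSet R (n + 2) := by simpa using hmul 1 one_mem_SuslinSet
  have tail : sus R (n + 1) (v ∘ Fin.succ) (w ∘ Fin.succ) = 0 :=
    sus_tail_eq_zero_of_Emat_zero_mul_mem (hmul _ (Emat_mem_SuslinSet 0))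
  have hdiag : sus R (n + 2) v w = pow2Blocks (v 0 • 1) 0 0 (w 0 • 1) := by
    rw [sus_succ, tail, sus_eq_zero_comm.1 tail, transpose_zero, neg_zero]
  have head : v 0 = w 0 := eq_of_Emat_one_mul_pow2Blocks_mem (hdiag ▸ hmul _ (Emat_mem_SuslinSet 1))
  exact ⟨v 0, by rw [hdiag, ← head, ← pow2Blocks_one (n := n + 1), smul_pow2Blocks, smul_zero]⟩

theorem Jmat_succ_of_even (hn : Even (n + 1)) :
    Jmat R (n + 1) = pow2Blocks (Jmat R n) 0 0 (-Jmat R n) := by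
  rw [Jmat, if_pos hn, pow2Blocks]

theorem Jmat_succ_of_not_even (hn : ¬Even (n + 1)) :
    Jmat R (n + 1) = pow2Blocks 0 (Jmat R n) (-Jmat R n) 0 := by
  rw [Jmat, if_neg hn, pow2Blocks]

theorem Jmat_mul_transpose : Jmat R n * (Jmat R n)ᵀ = 1 := by
  induction n with
  | zero => simp [Jmat]
  | succ n ih =>
    by_cases hn : Even (n + 1)
    · simp [Jmat_succ_of_even hn, pow2Blocks_transpose, pow2Blocks_mul, ih]
    · simp [Jmat_succ_of_not_even hn, pow2Blocks_transpose, pow2Blocks_mul, ih]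

theorem invol_smul_one (u : R) : invol R n (u • 1) = u • 1 := by
  simp [invol, Jmat_mul_transpose]

theorem diagBlock_eq_pow2Blocks (g₁ g₂ : Matrix (Fin (2 ^ n)) (Fin (2 ^ n)) R) :
    diagBlock R n g₁ g₂ = pow2Blocks g₁ 0 0 g₂ := rfl

theorem invol_diagBlock (hn : Even (n + 1)) (g₁ g₂ : Matrix (Fin (2 ^ n)) (Fin (2 ^ n)) R) :
    invol R (n + 1) (diagBlock R n g₁ g₂) = diagBlock R n (invol R n g₁) (invol R n g₂) := by
  simp [invol, Jmat_succ_of_even hn, diagBlock_eq_pow2Blocks, pow2Blocks_transpose, pow2Blocks_mul]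

theorem diagBlock_one_smul_one_mul_invol_eq_one_iff (hn : Even (n + 1)) {u : R} :
    diagBlock R n 1 (u • 1) * invol R (n + 1) (diagBlock R n 1 (u • 1)) = 1 ↔ u ^ 2 = 1 := by
  have invol_one : invol R n 1 = 1 := by simpa using invol_smul_one (1 : R)
  rw [invol_diagBlock hn, invol_one, invol_smul_one, ← pow2Blocks_one (n := n)]
  simp only [diagBlock_eq_pow2Blocks, pow2Blocks_mul, pow2Blocks_inj, mul_one, mul_zero, zero_mul,
    add_zero, zero_add, smul_mul_smul_comm, true_and, ← sq u]
  simpa only [one_smul] using smul_one_matrix_inj (b := (1 : R))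

variable {g₁ g₂ : Matrix (Fin (2 ^ n)) (Fin (2 ^ n)) R}

theorem phiMat_eq_pow2Blocks (v w : Fin (n + 1) → R) :
    phiMat R n v w = pow2Blocks 0 (sus R n v w) (susBar R n v w) 0 := rfl

theorem diagBlock_mul_phiMat_eq_iff {v w v' w' : Fin (n + 1) → R} :
    diagBlock R n g₁ g₂ * phiMat R n v w = phiMat R n v' w' * diagBlock R n g₁ g₂ ↔
      g₁ * sus R n v w = sus R n v' w' * g₂ ∧ g₂ * susBar R n v w = susBar R n v' w' * g₁ := by
  simp [diagBlock_eq_pow2Blocks, phiMat_eq_pow2Blocks, pow2Blocks_mul, pow2Blocks_inj]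

theorem exists_intertwining_of_mem_SpinPair (hg : (g₁, g₂) ∈ SpinPair R n)
    (v w : Fin (n + 1) → R) :
    ∃ v' w', g₁ * sus R n v w = sus R n v' w' * g₂ ∧
      g₂ * susBar R n v w = susBar R n v' w' * g₁ := by
  obtain ⟨-, -, hinvol, himage⟩ := hg
  have hdet := isUnit_det_of_right_inverse hinvol
  obtain ⟨v', w', hconj⟩ := himage.subset ⟨_, ⟨v, w, rfl⟩, rfl⟩
  have hcomm : diagBlock R n g₁ g₂ * phiMat R n v w = phiMat R n v' w' * diagBlock R n g₁ g₂ := by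
    rw [← hconj, nonsing_inv_mul_cancel_right _ _ hdet]
  exact ⟨v', w', diagBlock_mul_phiMat_eq_iff.1 hcomm⟩

theorem mul_transpose_mem_SuslinSet (hg : (1, g₂) ∈ SpinPair R n) {S} (hS : S ∈ SuslinSet R n) :
    S * g₂ᵀ ∈ SuslinSet R n := by
  obtain ⟨v, w, rfl⟩ := hS
  obtain ⟨v', w', -, h⟩ := exists_intertwining_of_mem_SpinPair hg w v
  exact ⟨w', v', by simpa [susBar] using congrArg transpose h⟩

theorem diagBlock_one_smul_one_conj_phiMat {u : R} (hu : u ^ 2 = 1) (v w : Fin (n + 1) → R) :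
    diagBlock R n 1 (u • 1) * phiMat R n v w * (diagBlock R n 1 (u • 1))⁻¹ =
      phiMat R n (u • v) (u • w) := by
  have hdet : IsUnit (diagBlock R n 1 (u • 1)).det := by
    refine isUnit_det_of_right_inverse (B := diagBlock R n 1 (u • 1)) ?_
    simp [diagBlock_eq_pow2Blocks, pow2Blocks_mul, smul_smul, ← sq u, hu]
  have hcomm : diagBlock R n 1 (u • 1) * phiMat R n v w =
      phiMat R n (u • v) (u • w) * diagBlock R n 1 (u • 1) := by
    simp [diagBlock_mul_phiMat_eq_iff, susBar, sus_smul, smul_smul, ← sq u, hu]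
  rw [hcomm, mul_nonsing_inv_cancel_right _ _ hdet]

theorem one_smul_one_mem_SpinPair_iff (hn : Even (n + 1)) {u : R} :
    (1, u • 1) ∈ SpinPair R n ↔ u ^ 2 = 1 := by
  refine ⟨fun h ↦ (diagBlock_one_smul_one_mul_invol_eq_one_iff hn).1 h.2.2.1, fun hu ↦
    ⟨isUnit_one, ?_, (diagBlock_one_smul_one_mul_invol_eq_one_iff hn).2 hu, ?_⟩⟩
  · exact .of_mul_eq_one (u • 1) (by simp [smul_smul, ← sq u, hu])
  · ext x
    constructor
    · rintro ⟨_, ⟨v, w, rfl⟩, rfl⟩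
      exact ⟨u • v, u • w, diagBlock_one_smul_one_conj_phiMat hu v w⟩
    · rintro ⟨v, w, rfl⟩
      refine ⟨_, ⟨u • v, u • w, rfl⟩, ?_⟩
      simp [diagBlock_one_smul_one_conj_phiMat hu, smul_smul, ← sq u, hu]

end Suslin

/-- for even `n > 2` (here `n = m + 1`), the kernel of the projection
`χ : Spin_{2n}(R) → GL_{2^{n-1}}(R)`, `(g₁, g₂) ↦ g₁`, consists exactly of the pairs
`(I, u·I)` with `u² = 1`; hence it is isomorphic to `μ₂(R)` and there is an exact sequence
`1 → μ₂(R) → Spin_{2n}(R) → GL_{2^{n-1}}(R)`. -/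
theorem spin_kernel_mu2 (R : Type) [CommRing R] (m : ℕ) (heven : Even (m + 1))
    (hm : 2 < m + 1) :
    {g : Matrix (Fin (2 ^ m)) (Fin (2 ^ m)) R |
        ((1 : Matrix (Fin (2 ^ m)) (Fin (2 ^ m)) R), g) ∈ SpinPair R m} =
      {g : Matrix (Fin (2 ^ m)) (Fin (2 ^ m)) R |
        ∃ u : R, u ^ 2 = 1 ∧ g = u • (1 : Matrix (Fin (2 ^ m)) (Fin (2 ^ m)) R)} := by
  obtain ⟨k, rfl⟩ : ∃ k, m = k + 2 := ⟨m - 2, by omega⟩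
  ext g
  constructor
  · intro hg
    obtain ⟨u, hu⟩ := exists_eq_smul_one_of_forall_mul_mem_SuslinSet
      fun _ ↦ mul_transpose_mem_SuslinSet hg
    obtain rfl : g = u • 1 := by simpa using congrArg transpose hu
    exact ⟨u, (one_smul_one_mem_SpinPair_iff heven).1 hg, rfl⟩
  · rintro ⟨u, hu, rfl⟩
    exact (one_smul_one_mem_SpinPair_iff heven).2 hu
end
end

section
/- Let R be a commutative ring and n = 2. A block-diagonal matrix diag(g₁, g₂) with g₁, g₂ ∈ GL_2(R) lies in Spin_4(R) if and only if det g₁ = 1 and det g₂ = 1; consequently Spin_4(R) ≅ SL_2(R) × SL_2(R). -/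
open Matrix

noncomputable section

/-!
For `m` odd, `J_{m+1} = diag(J_m, -J_m)`, so `diag(g₁, g₂)* = diag(g₁*, g₂*)`. For `m = 1` the
involution `*` is the adjugate, hence `x x* = 1` says exactly `det g₁ = det g₂ = 1`. It is then
automatic that `x` preserves the hyperbolic space: every `2 × 2` matrix `A` is a Suslin matrix
with conjugate `adj A`, and `g₁ A adj(g₂)` has adjugate `g₂ adj(A) adj(g₁)`, so conjugation by `x`
acts on the hyperbolic space as the bijection `A ↦ g₁ A g₂⁻¹` of `M_2(R)`.
-/

theorem surjective_mul_mul_of_isUnit {M : Type*} [Monoid M] {a b : M} (ha : IsUnit a)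
    (hb : IsUnit b) : Function.Surjective fun x => a * x * b :=
  (IsUnit.isUnit_iff_mulRight_bijective.1 hb).surjective.comp
    (IsUnit.isUnit_iff_mulLeft_bijective.1 ha).surjective

theorem isUnit_of_det_eq_one {R n : Type*} [CommRing R] [Fintype n] [DecidableEq n]
    {A : Matrix n n R} (hA : A.det = 1) : IsUnit A :=
  (isUnit_iff_isUnit_det A).2 (hA ▸ isUnit_one)

theorem mul_adjugate_eq_one_iff {R n : Type*} [CommRing R] [Fintype n] [DecidableEq n]
    [Nonempty n] (A : Matrix n n R) : A * A.adjugate = 1 ↔ A.det = 1 := by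
  rw [mul_adjugate, smul_one_eq_diagonal, ← diagonal_one, diagonal_eq_diagonal_iff, forall_const]

theorem adjugate_adjugate_of_card_eq_two {R n : Type*} [CommRing R] [Fintype n] [DecidableEq n]
    (hn : Fintype.card n = 2) (A : Matrix n n R) : A.adjugate.adjugate = A := by
  rw [adjugate_adjugate A (by lia), hn, Nat.sub_self, pow_zero, one_smul]

section BlockMatrices

variable {R : Type} [CommRing R] {m : ℕ}

/-- The block antidiagonal matrix `[[0, A], [B, 0]]`, indexed in the same way as `diagBlock`;
`phiMat` is the case where `A` is a Suslin matrix and `B` its conjugate. -/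
def antidiagBlock (A B : Matrix (Fin (2 ^ m)) (Fin (2 ^ m)) R) :
    Matrix (Fin (2 ^ (m + 1))) (Fin (2 ^ (m + 1))) R :=
  reindex (pow2Equiv m) (pow2Equiv m) (fromBlocks 0 A B 0)

theorem phiMat_eq_antidiagBlock (v w : Fin (m + 1) → R) :
    phiMat R m v w = antidiagBlock (sus R m v w) (susBar R m v w) :=
  rfl

theorem diagBlock_one : diagBlock R m 1 1 = 1 := by
  simp [diagBlock]

theorem diagBlock_inj {A B C D : Matrix (Fin (2 ^ m)) (Fin (2 ^ m)) R} :
    diagBlock R m A B = diagBlock R m C D ↔ A = C ∧ B = D := by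
  rw [diagBlock, diagBlock, (reindex _ _).injective.eq_iff, fromBlocks_inj]
  simp only [true_and]

theorem diagBlock_mul_diagBlock (A B C D : Matrix (Fin (2 ^ m)) (Fin (2 ^ m)) R) :
    diagBlock R m A B * diagBlock R m C D = diagBlock R m (A * C) (B * D) := by
  simp [diagBlock, submatrix_mul_equiv, fromBlocks_multiply]

theorem diagBlock_inv_of_det_eq_one {g₁ g₂ : Matrix (Fin (2 ^ m)) (Fin (2 ^ m)) R}
    (h₁ : g₁.det = 1) (h₂ : g₂.det = 1) :
    (diagBlock R m g₁ g₂)⁻¹ = diagBlock R m g₁.adjugate g₂.adjugate := by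
  refine inv_eq_right_inv ?_
  rw [diagBlock_mul_diagBlock, (mul_adjugate_eq_one_iff g₁).2 h₁,
    (mul_adjugate_eq_one_iff g₂).2 h₂, diagBlock_one]

theorem diagBlock_mul_antidiagBlock_mul_diagBlock
    (g₁ g₂ A B h₁ h₂ : Matrix (Fin (2 ^ m)) (Fin (2 ^ m)) R) :
    diagBlock R m g₁ g₂ * antidiagBlock A B * diagBlock R m h₁ h₂ =
      antidiagBlock (g₁ * A * h₂) (g₂ * B * h₁) := by
  simp [diagBlock, antidiagBlock, submatrix_mul_equiv, fromBlocks_multiply]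

theorem transpose_diagBlock (A B : Matrix (Fin (2 ^ m)) (Fin (2 ^ m)) R) :
    (diagBlock R m A B)ᵀ = diagBlock R m Aᵀ Bᵀ := by
  simp [diagBlock, fromBlocks_transpose]

theorem Jmat_succ_of_odd (hm : Odd m) :
    Jmat R (m + 1) = diagBlock R m (Jmat R m) (-Jmat R m) := by
  rw [Jmat, if_pos hm.add_one, diagBlock]

theorem invol_diagBlock_of_odd (hm : Odd m) (A B : Matrix (Fin (2 ^ m)) (Fin (2 ^ m)) R) :
    invol R (m + 1) (diagBlock R m A B) = diagBlock R m (invol R m A) (invol R m B) := by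
  simp only [invol, Jmat_succ_of_odd hm, transpose_diagBlock, diagBlock_mul_diagBlock,
    transpose_neg, Matrix.neg_mul, Matrix.mul_neg, neg_neg]

theorem diagBlock_mul_invol_eq_one_iff_of_odd (hm : Odd m)
    (g₁ g₂ : Matrix (Fin (2 ^ m)) (Fin (2 ^ m)) R) :
    diagBlock R m g₁ g₂ * invol R (m + 1) (diagBlock R m g₁ g₂) = 1 ↔
      g₁ * invol R m g₁ = 1 ∧ g₂ * invol R m g₂ = 1 := by
  rw [invol_diagBlock_of_odd hm, diagBlock_mul_diagBlock, ← diagBlock_one, diagBlock_inj]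

end BlockMatrices

section TwoByTwo

variable {R : Type} [CommRing R]

theorem sus_one (v w : Fin 2 → R) : sus R 1 v w = !![v 0, v 1; -w 1, w 0] := by
  ext i j
  fin_cases i <;> fin_cases j <;> simp [sus, pow2Equiv, finSumFinEquiv, Fin.addCases, fromBlocks]

theorem Jmat_one : Jmat R 1 = !![0, 1; -1, 0] := by
  ext i j
  fin_cases i <;> fin_cases j <;> simp [Jmat, pow2Equiv, finSumFinEquiv, Fin.addCases, fromBlocks]

theorem susBar_one (v w : Fin 2 → R) : susBar R 1 v w = (sus R 1 v w).adjugate := by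
  rw [susBar, sus_one, sus_one]
  -- `rw` cannot use `adjugate_fin_two_of` here: `Fin (2 ^ 1)` is only definitionally `Fin 2`.
  refine Eq.trans ?_ (adjugate_fin_two_of (v 0) (v 1) (-w 1) (w 0)).symm
  ext i j
  fin_cases i <;> fin_cases j <;> simp

theorem invol_one (A : Matrix (Fin (2 ^ 1)) (Fin (2 ^ 1)) R) : invol R 1 A = A.adjugate := by
  rw [invol, Jmat_one]
  refine Eq.trans ?_ (adjugate_fin_two A).symm
  ext i j
  fin_cases i <;> fin_cases j <;> simp [Matrix.mul_apply, vecMul, dotProduct]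

theorem exists_sus_one_eq (A : Matrix (Fin (2 ^ 1)) (Fin (2 ^ 1)) R) :
    ∃ v w, sus R 1 v w = A := by
  refine ⟨![A 0 0, A 0 1], ![A 1 1, -A 1 0], ?_⟩
  rw [sus_one]
  ext i j
  fin_cases i <;> fin_cases j <;> simp

theorem PhiSet_one :
    PhiSet R 1 = Set.range fun A : Matrix (Fin (2 ^ 1)) (Fin (2 ^ 1)) R =>
      antidiagBlock A A.adjugate := by
  ext x
  constructor
  · rintro ⟨v, w, rfl⟩
    exact ⟨sus R 1 v w, by rw [phiMat_eq_antidiagBlock, susBar_one]⟩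
  · rintro ⟨A, rfl⟩
    obtain ⟨v, w, rfl⟩ := exists_sus_one_eq A
    exact ⟨v, w, by rw [phiMat_eq_antidiagBlock, susBar_one]⟩

theorem diagBlock_mul_antidiagBlock_adjugate_mul_diagBlock_adjugate
    (g₁ g₂ A : Matrix (Fin (2 ^ 1)) (Fin (2 ^ 1)) R) :
    diagBlock R 1 g₁ g₂ * antidiagBlock A A.adjugate * diagBlock R 1 g₁.adjugate g₂.adjugate =
      antidiagBlock (g₁ * A * g₂.adjugate) (g₁ * A * g₂.adjugate).adjugate := by
  rw [diagBlock_mul_antidiagBlock_mul_diagBlock, adjugate_mul_distrib, adjugate_mul_distrib,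
    adjugate_adjugate_of_card_eq_two (by simp) g₂, Matrix.mul_assoc g₂]

theorem image_conj_PhiSet_one {g₁ g₂ : Matrix (Fin (2 ^ 1)) (Fin (2 ^ 1)) R}
    (h₁ : g₁.det = 1) (h₂ : g₂.det = 1) :
    (fun y => diagBlock R 1 g₁ g₂ * y * (diagBlock R 1 g₁ g₂)⁻¹) '' PhiSet R 1 = PhiSet R 1 := by
  have surjective_conj : Function.Surjective fun A => g₁ * A * g₂.adjugate :=
    surjective_mul_mul_of_isUnit (isUnit_of_det_eq_one h₁)
      (isUnit_of_det_eq_one (by rw [det_adjugate, h₂, one_pow]))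
  rw [PhiSet_one, ← Set.range_comp', diagBlock_inv_of_det_eq_one h₁ h₂]
  simp only [diagBlock_mul_antidiagBlock_adjugate_mul_diagBlock_adjugate]
  exact surjective_conj.range_comp fun A => antidiagBlock A A.adjugate

end TwoByTwo

/-- `diag(g₁, g₂) ∈ Spin_4(R)` if and only if `det g₁ = det g₂ = 1`;
consequently `Spin_4(R) ≅ SL_2(R) × SL_2(R)`. -/
theorem spin_four (R : Type) [CommRing R]
    (g₁ g₂ : Matrix (Fin (2 ^ 1)) (Fin (2 ^ 1)) R) :
    (g₁, g₂) ∈ SpinPair R 1 ↔ g₁.det = 1 ∧ g₂.det = 1 := by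
  have norm_iff : diagBlock R 1 g₁ g₂ * invol R 2 (diagBlock R 1 g₁ g₂) = 1 ↔
      g₁.det = 1 ∧ g₂.det = 1 := by
    rw [diagBlock_mul_invol_eq_one_iff_of_odd odd_one, invol_one, invol_one,
      mul_adjugate_eq_one_iff, mul_adjugate_eq_one_iff]
  constructor
  · rintro ⟨-, -, h, -⟩
    exact norm_iff.1 h
  · rintro ⟨h₁, h₂⟩
    exact ⟨isUnit_of_det_eq_one h₁, isUnit_of_det_eq_one h₂, norm_iff.2 ⟨h₁, h₂⟩,
      image_conj_PhiSet_one h₁ h₂⟩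
end
end

section
/- Let R be a commutative ring. For every matrix M ∈ M_4(R) and every Suslin matrix S = S_2(v,w) ∈ M_4(R), the product M·S·M* is again a Suslin matrix, i.e. there exist v', w' ∈ R³ with M·S·M* = S_2(v',w'). -/
open Matrix

noncomputable section

/-!
A `4 × 4` matrix `X` is a Suslin matrix if and only if `X * J` is alternating, where `J = J₂`: the
six coordinates of `(v, w)` are, up to sign, the six entries of `X * J` above the diagonal. Since
`Jᵀ * J = 1`, we have `(M * S * M*) * J = M * (S * J) * Mᵀ`, so sandwiching `S` by `M` amounts to
the change of variables by `Mᵀ` in an alternating form, which is again alternating.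
-/

section AlternatingMatrix

variable {n R : Type*} [Fintype n] [DecidableEq n] [CommRing R] {A : Matrix n n R}

theorem isAlt_toBilin'_mul_mul_transpose {m : Type*} [Fintype m] [DecidableEq m]
    (hA : (toBilin' A).IsAlt) (M : Matrix m n R) : (toBilin' (M * A * Mᵀ)).IsAlt := by
  have hcomp : toBilin' (M * A * Mᵀ) = (toBilin' A).comp (toLin' Mᵀ) (toLin' Mᵀ) := by
    rw [toBilin'_comp, transpose_transpose]
  rw [hcomp]
  exact fun x ↦ hA (toLin' Mᵀ x)

theorem apply_self_eq_zero_of_isAlt_toBilin' (hA : (toBilin' A).IsAlt) (i : n) : A i i = 0 := by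
  rw [← toBilin'_single A]
  exact hA _

theorem neg_apply_eq_of_isAlt_toBilin' (hA : (toBilin' A).IsAlt) (i j : n) : -A i j = A j i := by
  rw [← toBilin'_single A i, ← toBilin'_single A j]
  exact hA.neg_eq _ _

end AlternatingMatrix

section Suslin

variable {R : Type} [CommRing R]

theorem jmat_transpose_mul_self (n : ℕ) : (Jmat R n)ᵀ * Jmat R n = 1 := by
  induction n with
  | zero => simp [Jmat]
  | succ n ih =>
    rw [Jmat]
    split_ifs <;>
      simp [ih, submatrix_mul_equiv, fromBlocks_transpose, fromBlocks_multiply]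

theorem mul_mul_invol_mul_jmat {n : ℕ} (M X : Matrix (Fin (2 ^ n)) (Fin (2 ^ n)) R) :
    M * X * invol R n M * Jmat R n = M * (X * Jmat R n) * Mᵀ := by
  simp only [invol, Matrix.mul_assoc, jmat_transpose_mul_self, Matrix.mul_one]

theorem jmat_two :
    Jmat R 2 = !![0, 1, 0, 0; -1, 0, 0, 0; 0, 0, 0, -1; 0, 0, 1, 0] := by
  ext i j
  fin_cases i <;> fin_cases j <;>
    simp [Jmat, pow2Equiv, finSumFinEquiv, Fin.addCases, fromBlocks]

theorem sus_two (v w : Fin 3 → R) :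
    sus R 2 v w =
      !![  v 0,    0,  v 1,  v 2;
             0,  v 0, -w 2,  w 1;
          -w 1,  v 2,  w 0,    0;
          -w 2, -v 1,    0,  w 0] := by
  ext i j
  fin_cases i <;> fin_cases j <;>
    simp [sus, pow2Equiv, finSumFinEquiv, Fin.addCases, fromBlocks]

theorem sus_two_mul_jmat_two (v w : Fin 3 → R) :
    sus R 2 v w * Jmat R 2 =
      !![   0,  v 0,  v 2, -v 1;
         -v 0,    0,  w 1,  w 2;
         -v 2, -w 1,    0, -w 0;
          v 1, -w 2,  w 0,    0] := by
  rw [sus_two, jmat_two]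
  ext i j
  fin_cases i <;> fin_cases j <;> simp [Matrix.mul_apply, Fin.sum_univ_four]

theorem isAlt_toBilin'_sus_two_mul_jmat_two (v w : Fin 3 → R) :
    (toBilin' (sus R 2 v w * Jmat R 2)).IsAlt := by
  intro x
  rw [sus_two_mul_jmat_two, toBilin'_apply]
  simp only [of_apply, cons_val', cons_val_fin_one, Nat.reducePow, Fin.sum_univ_four,
    cons_val_zero, cons_val_one, cons_val]
  ring

theorem exists_eq_sus_two_mul_jmat_two {A : Matrix (Fin (2 ^ 2)) (Fin (2 ^ 2)) R}
    (hA : (toBilin' A).IsAlt) : ∃ v w : Fin 3 → R, A = sus R 2 v w * Jmat R 2 := by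
  have hdiag := apply_self_eq_zero_of_isAlt_toBilin' hA
  have hskew := neg_apply_eq_of_isAlt_toBilin' hA
  refine ⟨![A 0 1, -A 0 3, A 0 2], ![-A 2 3, A 1 2, A 1 3], ?_⟩
  rw [sus_two_mul_jmat_two]
  ext i j
  fin_cases i <;> fin_cases j <;> simp [hdiag, hskew]

theorem mem_suslinSet_two_iff {X : Matrix (Fin (2 ^ 2)) (Fin (2 ^ 2)) R} :
    X ∈ SuslinSet R 2 ↔ (toBilin' (X * Jmat R 2)).IsAlt := by
  constructor
  · rintro ⟨v, w, rfl⟩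
    exact isAlt_toBilin'_sus_two_mul_jmat_two v w
  · intro hX
    obtain ⟨v, w, h⟩ := exists_eq_sus_two_mul_jmat_two hX
    have hJ : Jmat R 2 * (Jmat R 2)ᵀ = 1 := mul_eq_one_comm.mp (jmat_transpose_mul_self 2)
    refine ⟨v, w, ?_⟩
    simpa only [Matrix.mul_assoc, hJ, Matrix.mul_one] using congrArg (· * (Jmat R 2)ᵀ) h

end Suslin

/-- for every `M ∈ M_4(R)` and every Suslin matrix `S = S_2(v,w)`,
the product `M·S·M*` is again a Suslin matrix. -/
theorem sandwich_four (R : Type) [CommRing R]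
    (M : Matrix (Fin (2 ^ 2)) (Fin (2 ^ 2)) R) (v w : Fin 3 → R) :
    ∃ v' w' : Fin 3 → R, M * sus R 2 v w * invol R 2 M = sus R 2 v' w' := by
  change M * sus R 2 v w * invol R 2 M ∈ SuslinSet R 2
  rw [mem_suslinSet_two_iff, mul_mul_invol_mul_jmat]
  exact isAlt_toBilin'_mul_mul_transpose (isAlt_toBilin'_sus_two_mul_jmat_two v w) M
end
end
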